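/- arXiv:1905.09426 — 14 statements merged into one kernel-verified Lean document; each statement's English description precedes it below -/
import Mathlib

section
/- Let A be a positive n×n real matrix. Then there exist positive diagonal n×n matrices X and Y such that the matrix XAY is doubly stochastic. -/
/-!
Let `y` maximise `∏ y_k / ∏ (A y)_i` over the standard simplex. The maximum exists because the
simplex is compact and `A y` has positive entries on it, and the maximiser has positive coordinates
because the quotient is positive at the barycentre. The quotient is homogeneous of degree zero, so
`y` is in fact a maximiser over all positive vectors (`exists_maximizer`). Stationarity of its
logarithm in the `j`-th coordinate direction reads `∑ i, A i j / (A y)_i = 1 / y_j`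
(`sum_div_mulVec_eq`), so that scaling the rows by `x_i = 1 / (A y)_i` and the columns by `y` makes
all column sums equal to one; the row sums are one by the choice of `x`.
-/

open Matrix BigOperators

/-- A real square matrix is doubly stochastic if every entry is nonnegative and
every row sum and every column sum equals 1. -/
def IsDoublyStochastic {n : ℕ} (A : Matrix (Fin n) (Fin n) ℝ) : Prop :=
  (∀ i j, 0 ≤ A i j) ∧ (∀ i, ∑ j, A i j = 1) ∧ (∀ j, ∑ i, A i j = 1)

lemma mulVec_pos_of_pos {n : ℕ} {A : Matrix (Fin n) (Fin n) ℝ} (hA : ∀ i j, 0 < A i j)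
    {y : Fin n → ℝ} (hy : ∀ j, 0 ≤ y j) (hs : 0 < ∑ j, y j) (i : Fin n) : 0 < (A *ᵥ y) i := by
  obtain ⟨j, hj, hj0⟩ := (Finset.sum_pos_iff_of_nonneg fun j _ => hy j).1 hs
  exact Finset.sum_pos' (fun k _ => mul_nonneg (hA i k).le (hy k)) ⟨j, hj, mul_pos (hA i j) hj0⟩

/-- Some positive `y` maximises `∏ z_k / ∏ (A z)_i` among positive vectors `z`; the inequality is
stated with denominators cleared. -/
lemma exists_maximizer {n : ℕ} [NeZero n] (A : Matrix (Fin n) (Fin n) ℝ)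
    (hA : ∀ i j, 0 < A i j) :
    ∃ y : Fin n → ℝ, (∀ j, 0 < y j) ∧ ∀ z : Fin n → ℝ, (∀ j, 0 < z j) →
      (∏ k, z k) * ∏ i, (A *ᵥ y) i ≤ (∏ k, y k) * ∏ i, (A *ᵥ z) i := by
  have hpos : ∀ y ∈ stdSimplex ℝ (Fin n), ∀ i, 0 < (A *ᵥ y) i := fun y hy i =>
    mulVec_pos_of_pos hA hy.1 (by rw [hy.2]; exact one_pos) i
  have hprod : ∀ y ∈ stdSimplex ℝ (Fin n), 0 < ∏ i, (A *ᵥ y) i := fun y hy =>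
    Finset.prod_pos fun i _ => hpos y hy i
  have hcont : ContinuousOn (fun y : Fin n → ℝ => (∏ k, y k) / ∏ i, (A *ᵥ y) i)
      (stdSimplex ℝ (Fin n)) := by
    refine ContinuousOn.div (by fun_prop) ?_ fun y hy => (hprod y hy).ne'
    simp only [Matrix.mulVec, dotProduct]
    fun_prop
  have hnorm : ∀ z : Fin n → ℝ, (∀ j, 0 < z j) →
      0 < ∑ j, z j ∧ (∑ j, z j)⁻¹ • z ∈ stdSimplex ℝ (Fin n) := by
    intro z hz
    have hs : 0 < ∑ j, z j := Finset.sum_pos (fun j _ => hz j) Finset.univ_nonempty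
    refine ⟨hs, fun j => mul_nonneg (inv_nonneg.2 hs.le) (hz j).le, ?_⟩
    simp only [Pi.smul_apply, smul_eq_mul, ← Finset.mul_sum]
    exact inv_mul_cancel₀ hs.ne'
  obtain ⟨y, hy, hmax⟩ := (isCompact_stdSimplex ℝ (Fin n)).exists_isMaxOn
    ⟨_, (hnorm 1 fun _ => one_pos).2⟩ hcont
  have key : ∀ z : Fin n → ℝ, (∀ j, 0 < z j) →
      (∏ k, z k) / ∏ i, (A *ᵥ z) i ≤ (∏ k, y k) / ∏ i, (A *ᵥ y) i := by
    intro z hz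
    obtain ⟨hs, hmem⟩ := hnorm z hz
    have h := isMaxOn_iff.1 hmax _ hmem
    simp only [Matrix.mulVec_smul, Pi.smul_apply, smul_eq_mul, Finset.prod_mul_distrib,
      Finset.prod_const] at h
    rwa [mul_div_mul_left _ _ (pow_ne_zero _ (inv_ne_zero hs.ne'))] at h
  have hAz : ∀ z : Fin n → ℝ, (∀ j, 0 < z j) → 0 < ∏ i, (A *ᵥ z) i := fun z hz =>
    Finset.prod_pos fun i _ => mulVec_pos_of_pos hA (fun j => (hz j).le) (hnorm z hz).1 i
  have hy0 : ∏ k, y k ≠ 0 := by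
    intro h0
    have h := key 1 fun _ => one_pos
    rw [h0, zero_div] at h
    have h1 : 0 < (∏ k : Fin n, (1 : Fin n → ℝ) k) / ∏ i, (A *ᵥ (1 : Fin n → ℝ)) i :=
      div_pos (Finset.prod_pos fun _ _ => one_pos) (hAz 1 fun _ => one_pos)
    exact absurd h (not_le.2 h1)
  refine ⟨y, fun j => lt_of_le_of_ne (hy.1 j) fun h => hy0 ?_, fun z hz => ?_⟩
  · exact Finset.prod_eq_zero (Finset.mem_univ j) h.symm
  · exact (div_le_div_iff₀ (hAz z hz) (hprod y hy)).1 (key z hz)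

/-- The first-order condition at a maximiser, in the `j`-th coordinate direction. -/
lemma sum_div_mulVec_eq {n : ℕ} [NeZero n] {A : Matrix (Fin n) (Fin n) ℝ}
    (hA : ∀ i j, 0 < A i j) {y : Fin n → ℝ} (hy : ∀ j, 0 < y j)
    (hmax : ∀ z : Fin n → ℝ, (∀ j, 0 < z j) →
      (∏ k, z k) * ∏ i, (A *ᵥ y) i ≤ (∏ k, y k) * ∏ i, (A *ᵥ z) i) (j : Fin n) :
    ∑ i, A i j / (A *ᵥ y) i = 1 / y j := by
  have hAy : ∀ z : Fin n → ℝ, (∀ j, 0 < z j) → ∀ i, 0 < (A *ᵥ z) i := fun z hz =>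
    mulVec_pos_of_pos hA (fun j => (hz j).le)
      (Finset.sum_pos (fun j _ => hz j) Finset.univ_nonempty)
  let z : ℝ → Fin n → ℝ := fun t => y + Pi.single j t
  have hAz : ∀ t i, (A *ᵥ z t) i = (A *ᵥ y) i + A i j * t := by
    intro t i
    simp [z, Matrix.mulVec_add, mul_comm]
  let φ : ℝ → ℝ := fun t => ∑ i, Real.log ((A *ᵥ y) i + A i j * t) - Real.log (y j + t)
  have hmin : IsLocalMin φ 0 := by
    filter_upwards [lt_mem_nhds (neg_neg_of_pos (hy j))] with t ht
    have hzt : ∀ k, 0 < z t k := by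
      intro k
      by_cases hk : k = j
      · subst hk
        simp only [z, Pi.add_apply, Pi.single_eq_same]
        linarith
      · simpa [z, hk] using hy k
    have h := Real.log_le_log (mul_pos (Finset.prod_pos fun k _ => hzt k)
      (Finset.prod_pos fun i _ => hAy y hy i)) (hmax (z t) hzt)
    rw [Real.log_mul (Finset.prod_pos fun k _ => hzt k).ne'
        (Finset.prod_pos fun i _ => hAy y hy i).ne',
      Real.log_mul (Finset.prod_pos fun k _ => hy k).ne'
        (Finset.prod_pos fun i _ => hAy _ hzt i).ne',
      Real.log_prod fun k _ => (hzt k).ne', Real.log_prod fun k _ => (hy k).ne',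
      Real.log_prod fun i _ => (hAy y hy i).ne',
      Real.log_prod fun i _ => (hAy _ hzt i).ne'] at h
    have hsum : ∑ k, Real.log (z t k) - ∑ k, Real.log (y k)
        = Real.log (y j + t) - Real.log (y j) := by
      rw [← Finset.sum_sub_distrib, Finset.sum_eq_single j]
      · simp [z]
      · intro k _ hk
        simp [z, hk]
      · simp
    simp only [hAz] at h
    simp only [φ, mul_zero, add_zero]
    linarith
  have hderiv : HasDerivAt φ (∑ i, A i j / (A *ᵥ y) i - 1 / y j) 0 := by
    refine HasDerivAt.sub (HasDerivAt.fun_sum fun i _ => ?_) ?_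
    · have h := (((hasDerivAt_id (0 : ℝ)).const_mul (A i j)).const_add ((A *ᵥ y) i)).log
        (by simpa using (hAy y hy i).ne')
      simpa using h
    · have h := ((hasDerivAt_id (0 : ℝ)).const_add (y j)).log (by simpa using (hy j).ne')
      simpa using h
  exact sub_eq_zero.1 (hmin.hasDerivAt_eq_zero hderiv)

/-- Sinkhorn: every positive square matrix can be scaled by positive diagonal
matrices to a doubly stochastic matrix. -/
theorem sinkhorn_existence {n : ℕ} (A : Matrix (Fin n) (Fin n) ℝ)
    (hA : ∀ i j, 0 < A i j) :
    ∃ x y : Fin n → ℝ, (∀ i, 0 < x i) ∧ (∀ i, 0 < y i) ∧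
      IsDoublyStochastic (Matrix.diagonal x * A * Matrix.diagonal y) := by
  rcases Nat.eq_zero_or_pos n with rfl | hn
  · exact ⟨0, 0, fun i => i.elim0, fun i => i.elim0, fun i => i.elim0, fun i => i.elim0,
      fun i => i.elim0⟩
  have : NeZero n := ⟨hn.ne'⟩
  obtain ⟨y, hy, hmax⟩ := exists_maximizer A hA
  have hAy : ∀ i, 0 < (A *ᵥ y) i := mulVec_pos_of_pos hA (fun j => (hy j).le)
    (Finset.sum_pos (fun j _ => hy j) Finset.univ_nonempty)
  refine ⟨fun i => ((A *ᵥ y) i)⁻¹, y, fun i => inv_pos.2 (hAy i), hy, ?_, ?_, ?_⟩ <;>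
    simp only [Matrix.mul_diagonal, Matrix.diagonal_mul]
  · exact fun i j => (mul_pos (mul_pos (inv_pos.2 (hAy i)) (hA i j)) (hy j)).le
  · intro i
    simp only [mul_assoc, ← Finset.mul_sum]
    exact inv_mul_cancel₀ (hAy i).ne'
  · intro j
    have h := sum_div_mulVec_eq hA hy hmax j
    simp only [div_eq_inv_mul, mul_one] at h
    rw [← Finset.sum_mul, h]
    exact inv_mul_cancel₀ (hy j).ne'
end

section
/- Let A be a positive n×n real matrix. If X, X', Y, Y' are positive diagonal n×n matrices such that both XAY and X'AY' are doubly stochastic, then XAY = X'AY', and there exists a real number λ > 0 such that X' = λX and Y' = λ⁻¹Y. -/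
/-!
Put `B = XAY`, `p i = x' i / x i` and `q j = y' j / y j`, so that `X'AY'` has entries
`p i * B i j * q j`. Let `M` be the largest `p i`, attained at `i₀`. The column sums of `X'AY'`
give `1 / q j = ∑ i, p i * B i j`, an average of the `p i`, hence `M⁻¹ ≤ q j` for all `j`. But row
`i₀` says that the average of the `q j` with weights `B i₀ j` is exactly `M⁻¹`. As all these weights
are positive, `q` is constantly `M⁻¹`, and then the row sums force `p` to be constantly `M`.
-/

open Matrix BigOperators

/-- If a positive doubly stochastic matrix `B` is scaled by positive vectors `p`, `q` to a matrix
with unit row and column sums, then `p` and `q` are constant and inverse to each other. -/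
lemma scaling_eq_const {n : ℕ} (B : Fin n → Fin n → ℝ) (p q : Fin n → ℝ)
    (hB : ∀ i j, 0 < B i j) (hp : ∀ i, 0 < p i) (hq : ∀ j, 0 < q j)
    (hr : ∀ i, ∑ j, B i j = 1) (hc : ∀ j, ∑ i, B i j = 1)
    (hr' : ∀ i, ∑ j, p i * B i j * q j = 1) (hc' : ∀ j, ∑ i, p i * B i j * q j = 1) :
    ∃ M : ℝ, 0 < M ∧ (∀ i, p i = M) ∧ ∀ j, q j = M⁻¹ := by
  rcases isEmpty_or_nonempty (Fin n) with he | he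
  · exact ⟨1, one_pos, fun i => he.elim i, fun j => he.elim j⟩
  obtain ⟨i₀, hmax⟩ := Finite.exists_max p
  have hM : 0 < p i₀ := hp i₀
  have hge : ∀ j, 1 ≤ p i₀ * q j := fun j => by
    calc (1 : ℝ) = ∑ i, p i * B i j * q j := (hc' j).symm
      _ ≤ ∑ i, p i₀ * B i j * q j := Finset.sum_le_sum fun i _ =>
          mul_le_mul_of_nonneg_right
            (mul_le_mul_of_nonneg_right (hmax i) (hB i j).le) (hq j).le
      _ = p i₀ * q j := by rw [← Finset.sum_mul, ← Finset.mul_sum, hc j, mul_one]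
  have hzero : ∑ j, B i₀ j * (p i₀ * q j - 1) = 0 := by
    have h : ∀ j, B i₀ j * (p i₀ * q j - 1) = p i₀ * B i₀ j * q j - B i₀ j :=
      fun j => by ring
    simp only [h, Finset.sum_sub_distrib, hr', hr, sub_self]
  have heq : ∀ j, q j = (p i₀)⁻¹ := fun j => by
    have h := (Finset.sum_eq_zero_iff_of_nonneg fun j _ =>
      mul_nonneg (hB i₀ j).le (sub_nonneg.2 (hge j))).1 hzero j (Finset.mem_univ j)
    have h2 := (mul_eq_zero.1 h).resolve_left (hB i₀ j).ne'
    exact eq_inv_of_mul_eq_one_right (sub_eq_zero.1 h2)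
  refine ⟨p i₀, hM, fun i => ?_, heq⟩
  have h := hr' i
  simp only [heq] at h
  rw [← Finset.sum_mul, ← Finset.mul_sum, hr i, mul_one] at h
  exact (mul_inv_eq_one₀ hM.ne').1 h

/-- Uniqueness of the Sinkhorn scaling: if two pairs of positive diagonal
matrices scale a positive matrix to doubly stochastic form, then the scaled
matrices agree, and the scaling matrices agree up to a positive scalar. -/
theorem sinkhorn_uniqueness {n : ℕ} (A : Matrix (Fin n) (Fin n) ℝ)
    (hA : ∀ i j, 0 < A i j)
    (x x' y y' : Fin n → ℝ)
    (hx : ∀ i, 0 < x i) (hx' : ∀ i, 0 < x' i)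
    (hy : ∀ i, 0 < y i) (hy' : ∀ i, 0 < y' i)
    (hDS : IsDoublyStochastic (Matrix.diagonal x * A * Matrix.diagonal y))
    (hDS' : IsDoublyStochastic (Matrix.diagonal x' * A * Matrix.diagonal y')) :
    Matrix.diagonal x * A * Matrix.diagonal y
      = Matrix.diagonal x' * A * Matrix.diagonal y' ∧
    ∃ lam : ℝ, 0 < lam ∧
      Matrix.diagonal x' = lam • Matrix.diagonal x ∧
      Matrix.diagonal y' = lam⁻¹ • Matrix.diagonal y := by
  obtain ⟨-, hr, hc⟩ := hDS
  obtain ⟨-, hr', hc'⟩ := hDS'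
  simp only [Matrix.mul_diagonal, Matrix.diagonal_mul] at hr hc hr' hc'
  have hent : ∀ i j, x' i / x i * (x i * A i j * y j) * (y' j / y j) = x' i * A i j * y' j := by
    intro i j
    have := (hx i).ne'
    have := (hy j).ne'
    field_simp
  obtain ⟨M, hM, hp, hq⟩ := scaling_eq_const (fun i j => x i * A i j * y j)
    (fun i => x' i / x i) (fun j => y' j / y j)
    (fun i j => mul_pos (mul_pos (hx i) (hA i j)) (hy j))
    (fun i => div_pos (hx' i) (hx i)) (fun j => div_pos (hy' j) (hy j)) hr hc
    (fun i => by simpa only [hent] using hr' i) (fun j => by simpa only [hent] using hc' j)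
  have hxM : x' = M • x := funext fun i => (div_eq_iff (hx i).ne').1 (hp i)
  have hyM : y' = M⁻¹ • y := funext fun j => (div_eq_iff (hy j).ne').1 (hq j)
  have hX : Matrix.diagonal x' = M • Matrix.diagonal x := by rw [hxM, Matrix.diagonal_smul]
  have hY : Matrix.diagonal y' = M⁻¹ • Matrix.diagonal y := by rw [hyM, Matrix.diagonal_smul]
  refine ⟨?_, M, hM, hX, hY⟩
  rw [hX, hY, Matrix.smul_mul, Matrix.smul_mul, Matrix.mul_smul, smul_smul,
    mul_inv_cancel₀ hM.ne', one_smul]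
end

section
/- Let A be a positive symmetric n×n real matrix. Then there exists a unique positive diagonal n×n matrix X such that XAX is doubly stochastic. -/
/-!
With `x` positive, `XAX` is doubly stochastic exactly when `x i * ∑ j, A i j * x j = 1` for
all `i` (symmetry of `A` makes the row and the column conditions agree).

Existence: put `x i = exp (t i)`. The equations say that `t` is a critical point of
`F t = (1/2) ∑ i j, A i j * exp (t i) * exp (t j) - ∑ i, t i`. The diagonal entries of `A` being
positive, `F t ≥ ‖t‖ - C` (`norm_sub_le_potential`), so the continuous function `F` attains a
minimum, where its partial derivatives vanish (`exists_scaling`).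

Uniqueness: given two solutions `x`, `y`, let `M` and `m` be the largest and the smallest of the
ratios `x i / y i`. The equation for `x` at an index attaining `M` gives `1 ≥ M * m`, and at an
index attaining `m` it gives `1 ≤ m * M`. So `M * m = 1`, and equality in the first estimate,
all entries of `A` being positive, forces `x = m • y`; hence `M = m = 1` (`scaling_unique`).
-/

open Matrix BigOperators

/-- The function of `t = log x` whose critical points are the logarithms of the scalings. -/
noncomputable def potential {n : ℕ} (A : Matrix (Fin n) (Fin n) ℝ) (t : Fin n → ℝ) : ℝ :=
  (∑ i, ∑ j, A i j * (Real.exp (t i) * Real.exp (t j))) / 2 - ∑ i, t i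

lemma isDoublyStochastic_scaling_iff {n : ℕ} (A : Matrix (Fin n) (Fin n) ℝ)
    (hA : ∀ i j, 0 < A i j) (hsymm : A.IsSymm) (x : Fin n → ℝ) (hx : ∀ i, 0 < x i) :
    IsDoublyStochastic (Matrix.diagonal x * A * Matrix.diagonal x) ↔
      ∀ i, x i * ∑ j, A i j * x j = 1 := by
  have entry : ∀ i j, (Matrix.diagonal x * A * Matrix.diagonal x) i j = x i * (A i j * x j) := by
    intro i j
    rw [Matrix.mul_diagonal, Matrix.diagonal_mul, mul_assoc]
  simp only [IsDoublyStochastic, entry]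
  constructor
  · rintro ⟨-, h, -⟩ i
    rw [Finset.mul_sum]
    exact h i
  · intro h
    refine ⟨fun i j => (mul_pos (hx i) (mul_pos (hA i j) (hx j))).le, fun i => ?_, fun j => ?_⟩
    · rw [← Finset.mul_sum]
      exact h i
    · rw [← h j, Finset.mul_sum]
      refine Finset.sum_congr rfl fun i _ => ?_
      rw [hsymm.apply j i]
      ring

lemma abs_sub_inv_le (a u : ℝ) (ha : 0 < a) :
    |u| - 1 / a ≤ a * (Real.exp u * Real.exp u) / 2 - u := by
  have hE : 0 < a * (Real.exp u * Real.exp u) := by positivity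
  have hinv : 0 < 1 / a := by positivity
  rcases le_total u 0 with hu | hu
  · rw [abs_of_nonpos hu]
    linarith
  · rw [abs_of_nonneg hu]
    -- `exp (2 * u) ≥ 2 * u ^ 2`, and `a * u ^ 2 - 2 * u + 1 / a` is a perfect square over `a`.
    have h1 := Real.quadratic_le_exp_of_nonneg (x := 2 * u) (by linarith)
    have h2 : Real.exp (2 * u) = Real.exp u * Real.exp u := by rw [two_mul, Real.exp_add]
    rw [h2] at h1
    have h3 : a * (2 * u ^ 2) ≤ a * (Real.exp u * Real.exp u) :=
      mul_le_mul_of_nonneg_left (by nlinarith) ha.le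
    have h4 : a * u ^ 2 - 2 * u + 1 / a = (a * u - 1) ^ 2 / a := by
      field_simp
      ring
    have h5 : 0 ≤ (a * u - 1) ^ 2 / a := by positivity
    linarith

lemma norm_sub_le_potential {n : ℕ} (A : Matrix (Fin n) (Fin n) ℝ)
    (hA : ∀ i j, 0 < A i j) (t : Fin n → ℝ) :
    ‖t‖ - ∑ i, 1 / A i i ≤ potential A t := by
  have h1 : ‖t‖ ≤ ∑ i, |t i| := by
    refine (pi_norm_le_iff_of_nonneg (Finset.sum_nonneg fun i _ => abs_nonneg _)).2 fun i => ?_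
    exact Finset.single_le_sum (f := fun i => |t i|) (fun i _ => abs_nonneg _) (Finset.mem_univ i)
  have h2 : ∑ i, A i i * (Real.exp (t i) * Real.exp (t i)) ≤
      ∑ i, ∑ j, A i j * (Real.exp (t i) * Real.exp (t j)) := by
    refine Finset.sum_le_sum fun i _ => ?_
    refine Finset.single_le_sum (f := fun j => A i j * (Real.exp (t i) * Real.exp (t j)))
      (fun j _ => ?_) (Finset.mem_univ i)
    have := hA i j
    positivity
  have h3 := Finset.sum_le_sum fun i (_ : i ∈ Finset.univ) => abs_sub_inv_le (A i i) (t i) (hA i i)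
  rw [Finset.sum_sub_distrib, Finset.sum_sub_distrib, ← Finset.sum_div] at h3
  unfold potential
  linarith

lemma continuous_potential {n : ℕ} (A : Matrix (Fin n) (Fin n) ℝ) :
    Continuous (potential A) := by
  unfold potential
  fun_prop

lemma exists_potential_min {n : ℕ} (A : Matrix (Fin n) (Fin n) ℝ) (hA : ∀ i j, 0 < A i j) :
    ∃ t, ∀ s, potential A t ≤ potential A s := by
  refine (continuous_potential A).exists_forall_le ?_
  refine Filter.tendsto_atTop_mono (norm_sub_le_potential A hA) ?_
  exact Filter.tendsto_atTop_add_const_right _ _ (tendsto_norm_cocompact_atTop (E := Fin n → ℝ))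

/-- The derivative of the potential along the line through `t` with direction `v`. -/
lemma hasDerivAt_potential {n : ℕ} (A : Matrix (Fin n) (Fin n) ℝ) (t v : Fin n → ℝ) :
    HasDerivAt (fun s : ℝ => potential A (fun i => t i + s * v i))
      ((∑ i, ∑ j, A i j * ((Real.exp (t i) * v i) * Real.exp (t j) +
        Real.exp (t i) * (Real.exp (t j) * v j))) / 2 - ∑ i, v i) 0 := by
  have hl : ∀ i, HasDerivAt (fun s : ℝ => t i + s * v i) (v i) 0 := fun i => by
    simpa using ((hasDerivAt_id (0 : ℝ)).mul_const (v i)).const_add (t i)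
  have he : ∀ i, HasDerivAt (fun s : ℝ => Real.exp (t i + s * v i)) (Real.exp (t i) * v i) 0 :=
    fun i => by simpa using (hl i).exp
  unfold potential
  refine HasDerivAt.sub (HasDerivAt.div_const ?_ 2) (HasDerivAt.fun_sum fun i _ => hl i)
  refine HasDerivAt.fun_sum fun i _ => HasDerivAt.fun_sum fun j _ => ?_
  simpa using ((he i).fun_mul (he j)).const_mul (A i j)

lemma exists_scaling {n : ℕ} (A : Matrix (Fin n) (Fin n) ℝ)
    (hA : ∀ i j, 0 < A i j) (hsymm : A.IsSymm) :
    ∃ x : Fin n → ℝ, (∀ i, 0 < x i) ∧ ∀ i, x i * ∑ j, A i j * x j = 1 := by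
  obtain ⟨t, ht⟩ := exists_potential_min A hA
  refine ⟨fun i => Real.exp (t i), fun i => Real.exp_pos _, fun k => ?_⟩
  have hmin : IsLocalMin (fun s : ℝ => potential A (fun i => t i + s * (Pi.single k 1 : Fin n → ℝ) i)) 0 :=
    Filter.Eventually.of_forall fun s => by simpa using ht _
  have h := hmin.hasDerivAt_eq_zero (hasDerivAt_potential A t (Pi.single k 1))
  simp only [mul_add, Finset.sum_add_distrib] at h
  have h1 : ∑ i, ∑ j, A i j * (Real.exp (t i) * Pi.single (M := fun _ => ℝ) k 1 i * Real.exp (t j))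
      = Real.exp (t k) * ∑ j, A k j * Real.exp (t j) := by
    rw [Finset.sum_eq_single k]
    · rw [Finset.mul_sum]
      refine Finset.sum_congr rfl fun j _ => ?_
      rw [Pi.single_eq_same]
      ring
    · intro i _ hi
      simp [Pi.single_eq_of_ne hi]
    · simp
  have h2 : ∑ i, ∑ j, A i j * (Real.exp (t i) * (Real.exp (t j) * Pi.single (M := fun _ => ℝ) k 1 j))
      = Real.exp (t k) * ∑ j, A k j * Real.exp (t j) := by
    rw [Finset.sum_comm, ← h1]
    refine Finset.sum_congr rfl fun j _ => Finset.sum_congr rfl fun i _ => ?_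
    rw [hsymm.apply j i]
    ring
  have h3 : ∑ i, Pi.single (M := fun _ => ℝ) k 1 i = 1 := by simp
  rw [h1, h2, h3] at h
  linarith

lemma scaling_unique {n : ℕ} (A : Matrix (Fin n) (Fin n) ℝ) (hA : ∀ i j, 0 < A i j)
    (x y : Fin n → ℝ) (hx : ∀ i, 0 < x i) (hy : ∀ i, 0 < y i)
    (hxA : ∀ i, x i * ∑ j, A i j * x j = 1) (hyA : ∀ i, y i * ∑ j, A i j * y j = 1) :
    x = y := by
  rcases isEmpty_or_nonempty (Fin n) with _ | _
  · exact Subsingleton.elim _ _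
  obtain ⟨i, hi⟩ := Finite.exists_max fun j => x j / y j
  obtain ⟨k, hk⟩ := Finite.exists_min fun j => x j / y j
  set M := x i / y i with hM
  set m := x k / y k with hm
  have hM0 : 0 < M := div_pos (hx i) (hy i)
  have hm0 : 0 < m := div_pos (hx k) (hy k)
  have hxi : x i = M * y i := by rw [hM, div_mul_cancel₀ _ (hy i).ne']
  have hxk : x k = m * y k := by rw [hm, div_mul_cancel₀ _ (hy k).ne']
  have hup : ∀ j, x j ≤ M * y j := fun j => (div_le_iff₀ (hy j)).1 (hi j)
  have hlo : ∀ j, m * y j ≤ x j := fun j => (le_div_iff₀ (hy j)).1 (hk j)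
  have hge : 1 ≤ m * M := by
    have h : ∑ j, A k j * x j ≤ M * ∑ j, A k j * y j := by
      rw [Finset.mul_sum]
      refine Finset.sum_le_sum fun j _ => ?_
      nlinarith [hup j, hA k j]
    calc 1 = x k * ∑ j, A k j * x j := (hxA k).symm
      _ ≤ x k * (M * ∑ j, A k j * y j) := mul_le_mul_of_nonneg_left h (hx k).le
      _ = m * M * (y k * ∑ j, A k j * y j) := by rw [hxk]; ring
      _ = m * M := by rw [hyA k, mul_one]
  have hnonneg : ∀ j ∈ Finset.univ, 0 ≤ A i j * (x j - m * y j) := fun j _ =>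
    mul_nonneg (hA i j).le (sub_nonneg.2 (hlo j))
  have hsum : x i * ∑ j, A i j * (x j - m * y j) = 1 - m * M := by
    have h : ∑ j, A i j * (x j - m * y j) = ∑ j, A i j * x j - m * ∑ j, A i j * y j := by
      rw [Finset.mul_sum, ← Finset.sum_sub_distrib]
      exact Finset.sum_congr rfl fun j _ => by ring
    calc x i * ∑ j, A i j * (x j - m * y j)
        = x i * ∑ j, A i j * x j - m * M * (y i * ∑ j, A i j * y j) := by
          rw [h, mul_sub]; nth_rewrite 2 [hxi]; ring
      _ = 1 - m * M := by rw [hxA i, hyA i, mul_one]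
  have hS := Finset.sum_nonneg hnonneg
  have hprod := mul_nonneg (hx i).le hS
  have hzero : ∑ j, A i j * (x j - m * y j) = 0 := by
    refine (mul_eq_zero.1 (?_ : x i * _ = 0)).resolve_left (hx i).ne'
    linarith
  have hmul : ∀ j, x j = m * y j := fun j => by
    have h := (Finset.sum_eq_zero_iff_of_nonneg hnonneg).1 hzero j (Finset.mem_univ j)
    exact sub_eq_zero.1 ((mul_eq_zero.1 h).resolve_left (hA i j).ne')
  have hMm : M = m := by rw [hM, hmul i, mul_div_cancel_right₀ _ (hy i).ne']
  have hm1 : m = 1 := by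
    rw [hMm] at hsum hge
    rw [hzero, mul_zero] at hsum
    nlinarith
  funext j
  rw [hmul j, hm1, one_mul]

/-- For a positive symmetric matrix A there is a unique positive diagonal
matrix X such that XAX is doubly stochastic. -/
theorem sinkhorn_symmetric_unique {n : ℕ} (A : Matrix (Fin n) (Fin n) ℝ)
    (hA : ∀ i j, 0 < A i j) (hsymm : A.IsSymm) :
    ∃! x : Fin n → ℝ, (∀ i, 0 < x i) ∧
      IsDoublyStochastic (Matrix.diagonal x * A * Matrix.diagonal x) := by
  obtain ⟨x, hx, hxA⟩ := exists_scaling A hA hsymm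
  refine ⟨x, ⟨hx, (isDoublyStochastic_scaling_iff A hA hsymm x hx).2 hxA⟩, ?_⟩
  rintro y ⟨hy, hyD⟩
  exact scaling_unique A hA y x hy hx
    ((isDoublyStochastic_scaling_iff A hA hsymm y hy).1 hyD) hxA
end

section
/- Let k, ℓ be positive integers, n = k + ℓ, and let M, B, N be positive real numbers. Let A be the MBN matrix determined by k, ℓ, M, B, N. If X = diag(x₁, …, xₙ) is a positive diagonal matrix such that XAX is doubly stochastic, then x₁ = x₂ = ⋯ = x_k and x_{k+1} = x_{k+2} = ⋯ = xₙ. -/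
open Matrix BigOperators

/-- The MBN matrix determined by k, ℓ, M, B, N: the (i,j) entry is M if both
indices are among the first k, N if both are among the last ℓ, and B otherwise. -/
def MBNmatrix (k l : ℕ) (M B N : ℝ) : Matrix (Fin (k + l)) (Fin (k + l)) ℝ :=
  fun i j =>
    if (i : ℕ) < k ∧ (j : ℕ) < k then M
    else if k ≤ (i : ℕ) ∧ k ≤ (j : ℕ) then N
    else B

/-- If a positive diagonal matrix X scales the MBN matrix to doubly stochastic
form, then the first k diagonal entries of X are all equal, and the last ℓ
diagonal entries of X are all equal. -/
theorem MBN_scaling_structure (k l : ℕ) (hk : 0 < k) (hl : 0 < l)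
    (M B N : ℝ) (hM : 0 < M) (hB : 0 < B) (hN : 0 < N)
    (x : Fin (k + l) → ℝ) (hx : ∀ i, 0 < x i)
    (hDS : IsDoublyStochastic
      (Matrix.diagonal x * MBNmatrix k l M B N * Matrix.diagonal x)) :
    (∀ i j : Fin (k + l), (i : ℕ) < k → (j : ℕ) < k → x i = x j) ∧
    (∀ i j : Fin (k + l), k ≤ (i : ℕ) → k ≤ (j : ℕ) → x i = x j) := by
  -- Row `i` of `XAX` sums to `x i * ∑ m, A i m * x m`, so `x i` is the inverse of
  -- `∑ m, A i m * x m` and depends only on row `i` of `A`; rows in one block coincide.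
  have rows : ∀ i j : Fin (k + l), MBNmatrix k l M B N i = MBNmatrix k l M B N j → x i = x j := by
    intro i j h
    have hi := hDS.2.1 i
    have hj := hDS.2.1 j
    simp only [Matrix.mul_diagonal, Matrix.diagonal_mul, mul_assoc, ← Finset.mul_sum] at hi hj
    rw [h] at hi
    exact (eq_inv_of_mul_eq_one_left hi).trans (eq_inv_of_mul_eq_one_left hj).symm
  refine ⟨fun i j hi hj => rows i j ?_, fun i j hi hj => rows i j ?_⟩
  · funext m
    simp [MBNmatrix, hi, hj, Nat.not_le.mpr hi, Nat.not_le.mpr hj]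
  · funext m
    simp [MBNmatrix, hi, hj, Nat.not_lt.mpr hi, Nat.not_lt.mpr hj]
end

section
/- Let k, ℓ be positive integers, n = k + ℓ, and let M, B, N be positive real numbers with MN ≠ B². Let A be the MBN matrix determined by k, ℓ, M, B, N, and set L = MN/B². Define a = 1/k + (n − √(n² + 4kℓ(L−1)))/(2k²(L−1)), b = (1 − ka)/ℓ, and c = (1 − kb)/ℓ. Then there exist positive real numbers x, y such that, with X the diagonal matrix whose first k diagonal entries equal x and last ℓ diagonal entries equal y, the matrix XAX is doubly stochastic, and its (i,j) entry equals a if i ≤ k and j ≤ k, equals c if i > k and j > k, and equals b otherwise. -/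
/-!
Write `n = k + l` and `S = √(n² + 4kl(L - 1))`. Rationalising the formula for `a` gives
`b = 2 / (n + S)`, and since `S² = (k - l)² + 4klL > (k - l)²` we have `|k - l| < S`, which makes
`a`, `b` and `c` all positive. The row-sum relations `ka + lb = 1` and `kb + lc = 1` hold by the
definitions of `b` and `c`, while the quadratic equation satisfied by `S` becomes `ac = L b²`.
That identity is exactly the compatibility condition for the scaling equations
`x² M = a`, `x y B = b`, `y² N = c`, which are solved by `x = √(a / M)`, `y = b / (x B)`.
-/

open Matrix BigOperators

/-- Here `S` stands for the square root in the formula for `a`, so `hSS` is its defining equation.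
The proof passes to the rationalised forms `a = (k - l + S) / (k (k + l + S))`,
`b = 2 / (k + l + S)`, `c = (l - k + S) / (l (k + l + S))`, where positivity is visible. -/
lemma block_values (k l L S a b c : ℝ) (hk : 0 < k) (hl : 0 < l) (hL : 0 < L) (hL1 : L ≠ 1)
    (hS : 0 ≤ S) (hSS : S ^ 2 = (k + l) ^ 2 + 4 * k * l * (L - 1))
    (ha : a = 1 / k + ((k + l) - S) / (2 * k ^ 2 * (L - 1)))
    (hb : b = (1 - k * a) / l) (hc : c = (1 - k * b) / l) :
    0 < a ∧ 0 < b ∧ 0 < c ∧ a * c = L * b ^ 2 := by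
  have hL1' : L - 1 ≠ 0 := sub_ne_zero.mpr hL1
  have hD : 0 < k + l + S := by positivity
  have hlt : |k - l| < S := by
    apply abs_lt_of_sq_lt_sq _ hS
    have : 0 < k * l * L := by positivity
    nlinarith
  obtain ⟨h1, h2⟩ := abs_lt.mp hlt
  have hb' : b = 2 / (k + l + S) := by
    rw [hb, ha]
    field_simp
    linear_combination hSS
  have ha' : a = (k - l + S) / (k * (k + l + S)) := by
    have h : k * a = 1 - l * b := by rw [hb]; field_simp; ring
    rw [hb'] at h
    field_simp at h ⊢
    linear_combination h
  have hc' : c = (l - k + S) / (l * (k + l + S)) := by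
    rw [hc, hb']
    field_simp
    ring
  refine ⟨?_, ?_, ?_, ?_⟩
  · rw [ha']; exact div_pos (by linarith) (by positivity)
  · rw [hb']; positivity
  · rw [hc']; exact div_pos (by linarith) (by positivity)
  · rw [ha', hb', hc']
    field_simp
    linear_combination hSS

/-- With `x`, `y` solving the first two scaling equations, `y² N = b² M N / (B² a) = L b² / a`, so the
third equation is the hypothesis `h`. -/
lemma exists_scaling_s6 (M B N L a b c : ℝ) (hM : 0 < M) (hB : 0 < B)
    (hL : L = M * N / B ^ 2) (ha : 0 < a) (hb : 0 < b) (h : a * c = L * b ^ 2) :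
    ∃ x y : ℝ, 0 < x ∧ 0 < y ∧ x * M * x = a ∧ x * B * y = b ∧ y * N * y = c := by
  have hx : 0 < √(a / M) := Real.sqrt_pos.mpr (by positivity)
  have hxx : √(a / M) ^ 2 * M = a := by
    rw [Real.sq_sqrt (by positivity)]
    field_simp
  generalize √(a / M) = x at hx hxx
  refine ⟨x, b / (x * B), hx, by positivity, by linear_combination hxx, by field_simp, ?_⟩
  rw [hL] at h
  field_simp at h ⊢
  -- Replacing `a` by `x² M` in the compatibility condition leaves a common factor `M`.
  rw [← hxx] at h
  apply mul_left_cancel₀ hM.ne'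
  linear_combination -h

/-- Explicit Sinkhorn limit of the MBN matrix when MN ≠ B². -/
theorem MBN_sinkhorn_formula (k l : ℕ) (hk : 0 < k) (hl : 0 < l)
    (M B N : ℝ) (hM : 0 < M) (hB : 0 < B) (hN : 0 < N)
    (hMBN : M * N ≠ B ^ 2)
    (L a b c : ℝ)
    (hL : L = M * N / B ^ 2)
    (ha : a = 1 / (k : ℝ) +
      ((k + l : ℝ) - Real.sqrt ((k + l : ℝ) ^ 2 + 4 * (k : ℝ) * (l : ℝ) * (L - 1)))
        / (2 * (k : ℝ) ^ 2 * (L - 1)))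
    (hb : b = (1 - (k : ℝ) * a) / (l : ℝ))
    (hc : c = (1 - (k : ℝ) * b) / (l : ℝ)) :
    ∃ x y : ℝ, 0 < x ∧ 0 < y ∧
      IsDoublyStochastic
        (Matrix.diagonal (fun i : Fin (k + l) => if (i : ℕ) < k then x else y)
          * MBNmatrix k l M B N *
          Matrix.diagonal (fun i : Fin (k + l) => if (i : ℕ) < k then x else y)) ∧
      ∀ i j : Fin (k + l),
        (Matrix.diagonal (fun i : Fin (k + l) => if (i : ℕ) < k then x else y)
          * MBNmatrix k l M B N *
          Matrix.diagonal (fun i : Fin (k + l) => if (i : ℕ) < k then x else y)) i j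
        = if (i : ℕ) < k ∧ (j : ℕ) < k then a
          else if k ≤ (i : ℕ) ∧ k ≤ (j : ℕ) then c
          else b := by
  have hk' : (0 : ℝ) < k := by exact_mod_cast hk
  have hl' : (0 : ℝ) < l := by exact_mod_cast hl
  have hL0 : 0 < L := by rw [hL]; positivity
  have hL1 : L ≠ 1 := by
    rw [hL]
    intro h
    exact hMBN (by field_simp at h; exact h)
  -- The radicand equals `(k - l)² + 4klL`, so the square root is not a junk value.
  have hrad : 0 ≤ ((k + l : ℝ) ^ 2 + 4 * (k : ℝ) * (l : ℝ) * (L - 1)) := by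
    have : (0 : ℝ) < k * l * L := by positivity
    nlinarith [sq_nonneg ((k : ℝ) - l)]
  obtain ⟨pa, pb, pc, hac⟩ := block_values k l L _ a b c hk' hl' hL0 hL1
    (Real.sqrt_nonneg _) (Real.sq_sqrt hrad) ha hb hc
  obtain ⟨x, y, hx, hy, hxa, hxb, hyc⟩ := exists_scaling_s6 M B N L a b c hM hB hL pa pb hac
  have hrow1 : (k : ℝ) * a + l * b = 1 := by rw [hb]; field_simp; ring
  have hrow2 : (k : ℝ) * b + l * c = 1 := by rw [hc]; field_simp; ring
  have key : ∀ i j : Fin (k + l),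
      (Matrix.diagonal (fun i : Fin (k + l) => if (i : ℕ) < k then x else y)
        * MBNmatrix k l M B N *
        Matrix.diagonal (fun i : Fin (k + l) => if (i : ℕ) < k then x else y)) i j
      = if (i : ℕ) < k ∧ (j : ℕ) < k then a
        else if k ≤ (i : ℕ) ∧ k ≤ (j : ℕ) then c
        else b := by
    intro i j
    have hyb : y * B * x = b := by linear_combination hxb
    rw [Matrix.mul_diagonal, Matrix.diagonal_mul, MBNmatrix]
    by_cases hi : (i : ℕ) < k <;> by_cases hj : (j : ℕ) < k <;>
      simp [hi, hj, not_le.mpr, not_lt.mp, hxa, hxb, hyb, hyc]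
  have hlow : ∀ t : Fin k, ¬ k ≤ (t : ℕ) := fun t => t.isLt.not_ge
  refine ⟨x, y, hx, hy, ⟨?_, ?_, ?_⟩, key⟩
  · intro i j
    rw [key]
    split_ifs <;> positivity
  · intro i
    simp only [key]
    rw [Fin.sum_univ_add]
    by_cases hi : (i : ℕ) < k
    · simp [hi, hi.not_ge, hrow1]
    · simp [hi, not_lt.mp hi, hlow, hrow2]
  · intro j
    simp only [key]
    rw [Fin.sum_univ_add]
    by_cases hj : (j : ℕ) < k
    · simp [hj, hj.not_ge, hrow1]
    · simp [hj, not_lt.mp hj, hlow, hrow2]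
end

section
/- Let K > 0 with K ≠ 1, and let A₂ be the 3×3 matrix with rows (K,1,1), (1,1,1), (1,1,1). Set a = (2K+1 − √(8K+1))/(2(K−1)), b = (−3 + √(8K+1))/(4(K−1)), c = (4K−1 − √(8K+1))/(8(K−1)). Then there exist positive real numbers x, y such that, with X = diag(x,y,y), the matrix X·A₂·X is doubly stochastic and equals the matrix with rows (a,b,b), (b,c,c), (b,c,c). -/
/-!
With `s = √(8K + 1)` one has `8(K - 1) = (s - 3)(s + 3)`, and the factor `s - 3` (nonzero as
`K ≠ 1`) cancels from the given fractions, leaving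
`a = (s - 1)/(s + 3)`, `b = 2/(s + 3)`, `c = (s + 1)/(2(s + 3))`.
As `s > 1`, these are positive, and visibly `a + 2b = 1`, `b + 2c = 1` and `K b² = a c`. The scaled
matrix has entries `K x²`, `x y`, `y²`, so `y = √c` and `x = b / √c` give `y² = c`, `x y = b` and
`K x² = K b² / c = a`.
-/

open Matrix BigOperators

/-- Sinkhorn limit of A₂ = ![![K,1,1],![1,1,1],![1,1,1]]. -/
theorem sinkhorn_A2 (K : ℝ) (hK : 0 < K) (hK1 : K ≠ 1)
    (A₂ : Matrix (Fin 3) (Fin 3) ℝ)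
    (hA : A₂ = !![K, 1, 1; 1, 1, 1; 1, 1, 1])
    (a b c : ℝ)
    (ha : a = (2 * K + 1 - Real.sqrt (8 * K + 1)) / (2 * (K - 1)))
    (hb : b = (-3 + Real.sqrt (8 * K + 1)) / (4 * (K - 1)))
    (hc : c = (4 * K - 1 - Real.sqrt (8 * K + 1)) / (8 * (K - 1))) :
    ∃ x y : ℝ, 0 < x ∧ 0 < y ∧
      IsDoublyStochastic
        (Matrix.diagonal ![x, y, y] * A₂ * Matrix.diagonal ![x, y, y]) ∧
      Matrix.diagonal ![x, y, y] * A₂ * Matrix.diagonal ![x, y, y]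
        = !![a, b, b; b, c, c; b, c, c] := by
  obtain ⟨s, hs⟩ : ∃ s, s = √(8 * K + 1) := ⟨_, rfl⟩
  rw [← hs] at ha hb hc
  have hs2 : s ^ 2 = 8 * K + 1 := by rw [hs]; exact Real.sq_sqrt (by linarith)
  have hs0 : 0 ≤ s := hs ▸ Real.sqrt_nonneg _
  have hs1 : 1 < s := by nlinarith
  obtain rfl : K = (s ^ 2 - 1) / 8 := by linarith
  have hs3 : s - 3 ≠ 0 := by
    intro h
    obtain rfl : s = 3 := by linarith
    norm_num at hK1
  have hp : s + 3 ≠ 0 := by linarith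
  have hK' : (s ^ 2 - 1) / 8 - 1 = (s - 3) * (s + 3) / 8 := by ring
  rw [hK'] at ha hb hc
  have ha' : a = (s - 1) / (s + 3) := by rw [ha]; field_simp; ring
  have hb' : b = 2 / (s + 3) := by rw [hb]; field_simp; ring
  have hc' : c = (s + 1) / (2 * (s + 3)) := by rw [hc]; field_simp; ring
  have ha0 : 0 < a := by rw [ha']; apply div_pos <;> linarith
  have hb0 : 0 < b := by rw [hb']; positivity
  have hc0 : 0 < c := by rw [hc']; positivity
  have hab : a + 2 * b = 1 := by rw [ha', hb']; field_simp; ring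
  have hbc : b + 2 * c = 1 := by rw [hb', hc']; field_simp; ring
  have hKb : (s ^ 2 - 1) / 8 * b ^ 2 = a * c := by rw [ha', hb', hc']; field_simp; ring
  have hy0 : 0 < √c := Real.sqrt_pos.2 hc0
  have hyy : √c * √c = c := Real.mul_self_sqrt hc0.le
  have hxy : b / √c * √c = b := div_mul_cancel₀ b hy0.ne'
  have hxx : b / √c * ((s ^ 2 - 1) / 8) * (b / √c) = a := by
    have h : b / √c * ((s ^ 2 - 1) / 8) * (b / √c) = (s ^ 2 - 1) / 8 * b ^ 2 / (√c * √c) := by ring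
    rw [h, hyy, hKb, mul_div_cancel_right₀ a hc0.ne']
  have hM : Matrix.diagonal ![b / √c, √c, √c] * A₂ * Matrix.diagonal ![b / √c, √c, √c]
      = !![a, b, b; b, c, c; b, c, c] := by
    subst hA
    ext i j
    rw [Matrix.mul_diagonal, Matrix.diagonal_mul]
    fin_cases i <;> fin_cases j <;> simp [hyy, hxy, hxx, mul_comm √c (b / √c)]
  refine ⟨b / √c, √c, div_pos hb0 hy0, hy0, ?_, hM⟩
  rw [hM]
  refine ⟨fun i j => ?_, fun i => ?_, fun j => ?_⟩
  · fin_cases i <;> fin_cases j <;> simp [ha0.le, hb0.le, hc0.le]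
  · fin_cases i <;> simp [Fin.sum_univ_three] <;> linarith
  · fin_cases j <;> simp [Fin.sum_univ_three] <;> linarith
end

section
/- Let K > 0 with K ≠ 1, and let A₃ be the 3×3 matrix with rows (1,1,1), (1,K,K), (1,K,K). Set a = (2K+1 − √(8K+1))/(2(K−1)), b = (−3 + √(8K+1))/(4(K−1)), c = (4K−1 − √(8K+1))/(8(K−1)). Then there exist positive real numbers x, y such that, with X = diag(x,y,y), the matrix X·A₃·X is doubly stochastic and equals the matrix with rows (a,b,b), (b,c,c), (b,c,c); in particular A₃ has the same Sinkhorn limit as the matrix with rows (K,1,1), (1,1,1), (1,1,1). -/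
/-!
All three matrices have the block shape `(p, q, q; q, r, r; q, r, r)`, and scaling by
`diag(x, y, y)` sends it to the same shape with entries `x²p`, `xyq`, `y²r`. So a positive
target `(a, b, c)` of row sum `1` is reached from `(1, 1, K)` by `x = √a`, `y = b / √a`, and from
`(K, 1, 1)` by `y = √c`, `x = b / √c`, the only constraint in both cases being `b² K = a c`.
With `s = √(8K + 1)` one has `K - 1 = (s - 3)(s + 3) / 8`, and cancelling `s - 3` turns the target
into `a = (s - 1) / (s + 3)`, `b = 2 / (s + 3)`, `c = (s + 1) / (2 (s + 3))`, from which
positivity, the row sums and the constraint are immediate.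
-/

open Matrix BigOperators

theorem diagonal_scale (x y p q r : ℝ) :
    Matrix.diagonal ![x, y, y] * !![p, q, q; q, r, r; q, r, r] * Matrix.diagonal ![x, y, y]
      = !![x ^ 2 * p, x * y * q, x * y * q; x * y * q, y ^ 2 * r, y ^ 2 * r;
          x * y * q, y ^ 2 * r, y ^ 2 * r] := by
  ext i j
  fin_cases i <;> fin_cases j <;>
    simp [Matrix.mul_diagonal, Matrix.diagonal_mul] <;> ring

theorem isDoublyStochastic_block {a b c : ℝ} (ha : 0 ≤ a) (hb : 0 ≤ b) (hc : 0 ≤ c)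
    (hab : a + 2 * b = 1) (hbc : b + 2 * c = 1) :
    IsDoublyStochastic !![a, b, b; b, c, c; b, c, c] := by
  refine ⟨fun i j => ?_, fun i => ?_, fun j => ?_⟩
  · fin_cases i <;> fin_cases j <;> simpa
  · fin_cases i <;> simp [Fin.sum_univ_three] <;> linarith
  · fin_cases j <;> simp [Fin.sum_univ_three] <;> linarith

/-- The closed forms after cancelling the common factor `√(8K + 1) - 3`, which is nonzero
because `K ≠ 1`, reduced to the relations that the scaling argument needs. -/
theorem limit_entries {K a b c : ℝ} (hK : 0 < K) (hK1 : K ≠ 1)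
    (ha : a = (2 * K + 1 - Real.sqrt (8 * K + 1)) / (2 * (K - 1)))
    (hb : b = (-3 + Real.sqrt (8 * K + 1)) / (4 * (K - 1)))
    (hc : c = (4 * K - 1 - Real.sqrt (8 * K + 1)) / (8 * (K - 1))) :
    0 < a ∧ 0 < b ∧ 0 < c ∧ a + 2 * b = 1 ∧ b + 2 * c = 1 ∧ b ^ 2 * K = a * c := by
  have hs2 : Real.sqrt (8 * K + 1) ^ 2 = 8 * K + 1 := Real.sq_sqrt (by linarith)
  have hs0 : 0 ≤ Real.sqrt (8 * K + 1) := Real.sqrt_nonneg _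
  generalize Real.sqrt (8 * K + 1) = s at *
  have hs1 : 1 < s := by nlinarith
  have hs3 : s + 3 ≠ 0 := by linarith
  have hK0 : K - 1 ≠ 0 := sub_ne_zero.mpr hK1
  have ha' : a = (s - 1) / (s + 3) := by
    rw [ha, div_eq_div_iff (by simpa using hK0) hs3]
    linear_combination -hs2
  have hb' : b = 2 / (s + 3) := by
    rw [hb, div_eq_div_iff (by simpa using hK0) hs3]
    linear_combination hs2
  have hc' : c = (s + 1) / (2 * (s + 3)) := by
    rw [hc, div_eq_div_iff (by simpa using hK0) (by simpa using hs3)]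
    linear_combination -2 * hs2
  have hKs : K = (s ^ 2 - 1) / 8 := by linarith
  subst ha' hb' hc'
  refine ⟨div_pos (by linarith) (by linarith), by positivity, by positivity, ?_, ?_, ?_⟩
  · field_simp
    ring
  · field_simp
    ring
  · rw [hKs]
    field_simp
    ring

/-- Sinkhorn limit of A₃ = ![![1,1,1],![1,K,K],![1,K,K]]; it has the same
Sinkhorn limit as A₂ = ![![K,1,1],![1,1,1],![1,1,1]]. -/
theorem sinkhorn_A3 (K : ℝ) (hK : 0 < K) (hK1 : K ≠ 1)
    (A₃ : Matrix (Fin 3) (Fin 3) ℝ)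
    (hA : A₃ = !![1, 1, 1; 1, K, K; 1, K, K])
    (a b c : ℝ)
    (ha : a = (2 * K + 1 - Real.sqrt (8 * K + 1)) / (2 * (K - 1)))
    (hb : b = (-3 + Real.sqrt (8 * K + 1)) / (4 * (K - 1)))
    (hc : c = (4 * K - 1 - Real.sqrt (8 * K + 1)) / (8 * (K - 1))) :
    ∃ x y : ℝ, 0 < x ∧ 0 < y ∧
      IsDoublyStochastic
        (Matrix.diagonal ![x, y, y] * A₃ * Matrix.diagonal ![x, y, y]) ∧
      Matrix.diagonal ![x, y, y] * A₃ * Matrix.diagonal ![x, y, y]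
        = !![a, b, b; b, c, c; b, c, c] ∧
      -- in particular, A₃ has the same Sinkhorn limit as
      -- A₂ = !![K,1,1; 1,1,1; 1,1,1]:
      ∃ x' y' : ℝ, 0 < x' ∧ 0 < y' ∧
        IsDoublyStochastic
          (Matrix.diagonal ![x', y', y'] * !![K, 1, 1; 1, 1, 1; 1, 1, 1]
            * Matrix.diagonal ![x', y', y']) ∧
        Matrix.diagonal ![x', y', y'] * !![K, 1, 1; 1, 1, 1; 1, 1, 1]
            * Matrix.diagonal ![x', y', y']
          = Matrix.diagonal ![x, y, y] * A₃ * Matrix.diagonal ![x, y, y] := by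
  obtain ⟨ha0, hb0, hc0, hab, hbc, hbK⟩ := limit_entries hK hK1 ha hb hc
  have hds := isDoublyStochastic_block ha0.le hb0.le hc0.le hab hbc
  have hsa : 0 < √a := Real.sqrt_pos.mpr ha0
  have hsc : 0 < √c := Real.sqrt_pos.mpr hc0
  have h₃ : Matrix.diagonal ![√a, b / √a, b / √a] * A₃ * Matrix.diagonal ![√a, b / √a, b / √a]
      = !![a, b, b; b, c, c; b, c, c] := by
    have hx : √a ^ 2 * 1 = a := by rw [Real.sq_sqrt ha0.le, mul_one]
    have hxy : √a * (b / √a) * 1 = b := by field_simp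
    have hy : (b / √a) ^ 2 * K = c := by
      rw [div_pow, Real.sq_sqrt ha0.le, div_mul_eq_mul_div, hbK, mul_div_cancel_left₀ _ ha0.ne']
    rw [hA, diagonal_scale, hx, hxy, hy]
  have h₂ : Matrix.diagonal ![b / √c, √c, √c] * !![K, 1, 1; 1, 1, 1; 1, 1, 1]
      * Matrix.diagonal ![b / √c, √c, √c] = !![a, b, b; b, c, c; b, c, c] := by
    have hx : (b / √c) ^ 2 * K = a := by
      rw [div_pow, Real.sq_sqrt hc0.le, div_mul_eq_mul_div, hbK, mul_div_cancel_right₀ _ hc0.ne']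
    have hxy : b / √c * √c * 1 = b := by field_simp
    have hy : √c ^ 2 * 1 = c := by rw [Real.sq_sqrt hc0.le, mul_one]
    rw [diagonal_scale, hx, hxy, hy]
  exact ⟨√a, b / √a, hsa, div_pos hb0 hsa, h₃ ▸ hds, h₃, b / √c, √c, div_pos hb0 hsc, hsc,
    h₂ ▸ hds, h₂.trans h₃.symm⟩
end

section
/- Let K > 0 with K ≠ 1, and let A₄ be the 3×3 matrix with rows (1,K,K), (K,1,1), (K,1,1). Set a = (−K² − 2 + K√(K²+8))/(2(K²−1)), b = (3K² − K√(K²+8))/(4(K²−1)), c = (K² − 4 + K√(K²+8))/(8(K²−1)). Then there exist positive real numbers x, y such that, with X = diag(x,y,y), the matrix X·A₄·X is doubly stochastic and equals the matrix with rows (a,b,b), (b,c,c), (b,c,c). -/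
/-!
Rationalizing the numerators with `S = √(K² + 8)` gives `a = 2 / (K S + K² + 2)`,
`b = 2 K / (3 K + S)` and `c = 2 / (K S - K² + 4)`. Since `S > K > 0`, these are positive.
The relations `a + 2 b = 1` and `b + 2 c = 1` say that the target matrix is doubly stochastic,
and `b² = K² a c` says that the scaling `x = √a`, `y = √c` also yields the off-diagonal
entries: `K x y = b`.
-/

open Matrix BigOperators

/-- Sinkhorn limit of A₄ = ![![1,K,K],![K,1,1],![K,1,1]]. -/
theorem sinkhorn_A4 (K : ℝ) (hK : 0 < K) (hK1 : K ≠ 1)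
    (A₄ : Matrix (Fin 3) (Fin 3) ℝ)
    (hA : A₄ = !![1, K, K; K, 1, 1; K, 1, 1])
    (a b c : ℝ)
    (ha : a = (-K ^ 2 - 2 + K * Real.sqrt (K ^ 2 + 8)) / (2 * (K ^ 2 - 1)))
    (hb : b = (3 * K ^ 2 - K * Real.sqrt (K ^ 2 + 8)) / (4 * (K ^ 2 - 1)))
    (hc : c = (K ^ 2 - 4 + K * Real.sqrt (K ^ 2 + 8)) / (8 * (K ^ 2 - 1))) :
    ∃ x y : ℝ, 0 < x ∧ 0 < y ∧
      IsDoublyStochastic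
        (Matrix.diagonal ![x, y, y] * A₄ * Matrix.diagonal ![x, y, y]) ∧
      Matrix.diagonal ![x, y, y] * A₄ * Matrix.diagonal ![x, y, y]
        = !![a, b, b; b, c, c; b, c, c] := by
  have hSpos : 0 < Real.sqrt (K ^ 2 + 8) := Real.sqrt_pos.2 (by positivity)
  have hSsq : Real.sqrt (K ^ 2 + 8) ^ 2 = K ^ 2 + 8 := Real.sq_sqrt (by positivity)
  have hKS : K < Real.sqrt (K ^ 2 + 8) := Real.lt_sqrt_of_sq_lt (by linarith)
  set S := Real.sqrt (K ^ 2 + 8)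
  have hD : K ^ 2 - 1 ≠ 0 := by
    intro h
    have h' : (K - 1) * (K + 1) = 0 := by linarith
    rcases mul_eq_zero.1 h' with h' | h'
    · exact hK1 (by linarith)
    · linarith
  have hKS2 : 0 < K * (S - K) := mul_pos hK (by linarith)
  have ha0 : 0 < a := by
    have hden : 0 < K * S + K ^ 2 + 2 := by positivity
    have h : a = 2 / (K * S + K ^ 2 + 2) := by
      rw [ha, div_eq_div_iff (by simpa using hD) hden.ne']
      linear_combination K ^ 2 * hSsq
    rw [h]; positivity
  have hb0 : 0 < b := by
    have hden : 0 < 3 * K + S := by positivity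
    have h : b = 2 * K / (3 * K + S) := by
      rw [hb, div_eq_div_iff (by simpa using hD) hden.ne']
      linear_combination -K * hSsq
    rw [h]; positivity
  have hc0 : 0 < c := by
    have hden : 0 < K * S - K ^ 2 + 4 := by linarith
    have h : c = 2 / (K * S - K ^ 2 + 4) := by
      rw [hc, div_eq_div_iff (by simpa using hD) hden.ne']
      linear_combination K ^ 2 * hSsq
    rw [h]; positivity
  have hab : a + 2 * b = 1 := by
    rw [ha, hb]; field_simp; ring
  have hbc : b + 2 * c = 1 := by
    rw [hb, hc]; field_simp; ring
  have hprod : b ^ 2 = K ^ 2 * (a * c) := by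
    rw [ha, hb, hc, div_mul_div_comm, div_pow, ← mul_div_assoc,
      div_eq_div_iff (by simpa using hD) (by simpa using hD)]
    linear_combination (16 * K ^ 2 * (K ^ 2 - 1) ^ 2 * (1 - K ^ 2)) * hSsq
  have hx : √a * √a = a := Real.mul_self_sqrt ha0.le
  have hy : √c * √c = c := Real.mul_self_sqrt hc0.le
  have hxy : √a * K * √c = b := by
    have hsq : (√a * K * √c) ^ 2 = b ^ 2 := by
      rw [hprod, mul_pow, mul_pow, Real.sq_sqrt ha0.le, Real.sq_sqrt hc0.le]; ring
    exact (sq_eq_sq₀ (by positivity) hb0.le).1 hsq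
  have hyx : √c * K * √a = b := by rw [← hxy]; ring
  have hM : Matrix.diagonal ![√a, √c, √c] * A₄ * Matrix.diagonal ![√a, √c, √c]
      = !![a, b, b; b, c, c; b, c, c] := by
    ext i j
    rw [Matrix.mul_diagonal, Matrix.diagonal_mul, hA]
    fin_cases i <;> fin_cases j <;> simp [hx, hy, hxy, hyx]
  refine ⟨√a, √c, Real.sqrt_pos.2 ha0, Real.sqrt_pos.2 hc0, ?_, hM⟩
  rw [hM]
  refine ⟨fun i j => ?_, fun i => ?_, fun j => ?_⟩
  · fin_cases i <;> fin_cases j <;> simp [ha0.le, hb0.le, hc0.le]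
  · fin_cases i <;> simp [Fin.sum_univ_three] <;> linarith
  · fin_cases j <;> simp [Fin.sum_univ_three] <;> linarith
end

section
/- Let K > 0 with K ≠ 1, and let A₅ be the 3×3 matrix with rows (K,1,1), (1,K,1), (1,1,1). Then there exist positive real numbers x, z with x² = (2K+1 − √(4K+5))/(2(K²−1)) and z² = (K+2 − √(4K+5))/(K−1) such that, with X = diag(x,x,z), the matrix X·A₅·X is doubly stochastic and equals the matrix with rows (Kx², x², xz), (x², Kx², xz), (xz, xz, z²). -/
/-!
Since `X * A₅ * X` is symmetric, double stochasticity reduces to the two equations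
`(K + 1) * x ^ 2 + x * z = 1` and `2 * x * z + z ^ 2 = 1`. Put `s = √(4 * K + 5)`.
The identity `(2 * K + 1) ^ 2 - s ^ 2 = 4 * (K ^ 2 - 1)` rationalizes the prescribed value
of `x ^ 2` to `2 / (2 * K + 1 + s)`, which is positive for every `K > 0`. The first equation
then gives `z = (s - 1) / 2 * x`, positive because `s > 1`, and the second equation and the
formula for `z ^ 2` are polynomial consequences of `s ^ 2 = 4 * K + 5`.
-/

open Matrix BigOperators

/-- Sinkhorn limit of A₅ = ![![K,1,1],![1,K,1],![1,1,1]]. -/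
theorem sinkhorn_A5 (K : ℝ) (hK : 0 < K) (hK1 : K ≠ 1)
    (A₅ : Matrix (Fin 3) (Fin 3) ℝ)
    (hA : A₅ = !![K, 1, 1; 1, K, 1; 1, 1, 1]) :
    ∃ x z : ℝ, 0 < x ∧ 0 < z ∧
      x ^ 2 = (2 * K + 1 - Real.sqrt (4 * K + 5)) / (2 * (K ^ 2 - 1)) ∧
      z ^ 2 = (K + 2 - Real.sqrt (4 * K + 5)) / (K - 1) ∧
      IsDoublyStochastic
        (Matrix.diagonal ![x, x, z] * A₅ * Matrix.diagonal ![x, x, z]) ∧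
      Matrix.diagonal ![x, x, z] * A₅ * Matrix.diagonal ![x, x, z]
        = !![K * x ^ 2, x ^ 2, x * z;
             x ^ 2, K * x ^ 2, x * z;
             x * z, x * z, z ^ 2] := by
  subst hA
  set s := Real.sqrt (4 * K + 5) with hs
  have hs2 : s ^ 2 = 4 * K + 5 := Real.sq_sqrt (by linarith)
  have hs1 : 1 < s := by
    rw [hs]
    exact Real.lt_sqrt_of_sq_lt (by linarith)
  have hKm : K - 1 ≠ 0 := sub_ne_zero.mpr hK1
  have hKp : K + 1 ≠ 0 := by positivity
  have hKK : K ^ 2 - 1 ≠ 0 := by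
    have h : K ^ 2 - 1 = (K - 1) * (K + 1) := by ring
    rw [h]
    exact mul_ne_zero hKm hKp
  have hd : 0 < 2 * K + 1 + s := by linarith
  -- Rationalized form of `x ^ 2`, manifestly positive and free of `K - 1`.
  have ha : (2 * K + 1 - s) / (2 * (K ^ 2 - 1)) = 2 / (2 * K + 1 + s) := by
    rw [div_eq_div_iff (by simpa using hKK) hd.ne']
    linear_combination -hs2
  obtain ⟨x, hx, hxa⟩ : ∃ x : ℝ, 0 < x ∧ x ^ 2 = 2 / (2 * K + 1 + s) :=
    ⟨Real.sqrt (2 / (2 * K + 1 + s)), Real.sqrt_pos.mpr (by positivity),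
      Real.sq_sqrt (by positivity)⟩
  have hxd : x ^ 2 * (2 * K + 1 + s) = 2 := by
    rw [hxa]
    field_simp
  -- The first row sum `(K + 1) * x ^ 2 + x * z = 1` forces `z = (s - 1) / 2 * x`.
  obtain ⟨z, hz⟩ : ∃ z : ℝ, z = (s - 1) / 2 * x := ⟨_, rfl⟩
  have hz0 : 0 < z := by
    rw [hz]
    exact mul_pos (by linarith) hx
  have hrow : K * x ^ 2 + x ^ 2 + x * z = 1 := by
    rw [hz]
    linear_combination hxd / 2
  have hrow3 : x * z + x * z + z ^ 2 = 1 := by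
    rw [hz]
    linear_combination hxd / 2 + x ^ 2 / 4 * hs2
  have hM : Matrix.diagonal ![x, x, z] * !![K, 1, 1; 1, K, 1; 1, 1, 1] *
      Matrix.diagonal ![x, x, z]
        = !![K * x ^ 2, x ^ 2, x * z;
             x ^ 2, K * x ^ 2, x * z;
             x * z, x * z, z ^ 2] := by
    ext i j
    rw [Matrix.mul_diagonal, Matrix.diagonal_mul]
    fin_cases i <;> fin_cases j <;> simp <;> ring
  refine ⟨x, z, hx, hz0, hxa.trans ha.symm, ?_, ?_, hM⟩
  · have hxa' := hxa.trans ha.symm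
    rw [eq_div_iff (by simpa using hKK)] at hxa'
    rw [eq_div_iff hKm, hz]
    apply mul_right_cancel₀ hKp
    linear_combination (s - 1) ^ 2 / 8 * hxa' + (2 * K + 3 - s) / 8 * hs2
  · rw [hM]
    refine ⟨fun i j => ?_, fun i => ?_, fun j => ?_⟩
    · fin_cases i <;> fin_cases j <;> simp <;> positivity
    · fin_cases i <;> simp [Fin.sum_univ_three] <;> linarith
    · fin_cases j <;> simp [Fin.sum_univ_three] <;> linarith
end

section
/- Let K > 0 with K ≠ 1, and let A₆ be the 3×3 matrix with rows (K,K,1), (K,1,1), (1,1,1). Set a = (K^{2/3} − K^{1/3})/(K−1), b = (K − K^{2/3})/(K−1), c = (K^{1/3} − 1)/(K−1). Then with x = 1/(K^{1/3}·√(1 + K^{1/3} + K^{2/3})), y = 1/√(1 + K^{1/3} + K^{2/3}), z = K^{1/3}/√(1 + K^{1/3} + K^{2/3}), the matrix X = diag(x,y,z) is positive diagonal and X·A₆·X is the doubly stochastic circulant matrix with rows (a,b,c), (b,c,a), (c,a,b). -/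
/-!
Put `t = K ^ (1/3)` and `S = 1 + t + t ^ 2`. Since `K - 1 = t ^ 3 - 1 = (t - 1) * S`, the
entries of the circulant matrix are `a = t / S`, `b = t ^ 2 / S`, `c = 1 / S`, which are positive
and sum to `1`. The diagonal entries are the geometric progression `(t⁻¹, 1, t)` divided by `√S`,
so the scaled matrix can be compared with the circulant one entry by entry, the square roots
combining to `S`.
-/

open Matrix BigOperators

/-- Sinkhorn limit of A₆ = ![![K,K,1],![K,1,1],![1,1,1]]: a circulant doubly
stochastic matrix involving the real cube root of K. -/
theorem sinkhorn_A6 (K : ℝ) (hK : 0 < K) (hK1 : K ≠ 1)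
    (A₆ : Matrix (Fin 3) (Fin 3) ℝ)
    (hA : A₆ = !![K, K, 1; K, 1, 1; 1, 1, 1])
    (a b c x y z : ℝ)
    (ha : a = (K ^ ((2 : ℝ) / 3) - K ^ ((1 : ℝ) / 3)) / (K - 1))
    (hb : b = (K - K ^ ((2 : ℝ) / 3)) / (K - 1))
    (hc : c = (K ^ ((1 : ℝ) / 3) - 1) / (K - 1))
    (hx : x = 1 / (K ^ ((1 : ℝ) / 3)
      * Real.sqrt (1 + K ^ ((1 : ℝ) / 3) + K ^ ((2 : ℝ) / 3))))
    (hy : y = 1 / Real.sqrt (1 + K ^ ((1 : ℝ) / 3) + K ^ ((2 : ℝ) / 3)))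
    (hz : z = K ^ ((1 : ℝ) / 3)
      / Real.sqrt (1 + K ^ ((1 : ℝ) / 3) + K ^ ((2 : ℝ) / 3))) :
    (0 < x ∧ 0 < y ∧ 0 < z) ∧
    IsDoublyStochastic
      (Matrix.diagonal ![x, y, z] * A₆ * Matrix.diagonal ![x, y, z]) ∧
    Matrix.diagonal ![x, y, z] * A₆ * Matrix.diagonal ![x, y, z]
      = !![a, b, c; b, c, a; c, a, b] := by
  obtain ⟨t, ht⟩ : ∃ t : ℝ, t = K ^ ((1 : ℝ) / 3) := ⟨_, rfl⟩
  have ht0 : 0 < t := ht ▸ Real.rpow_pos_of_pos hK _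
  have ht2 : K ^ ((2 : ℝ) / 3) = t ^ 2 := by
    rw [ht, ← Real.rpow_mul_natCast hK.le]
    norm_num
  have ht3 : K = t ^ 3 := by
    rw [ht, ← Real.rpow_mul_natCast hK.le]
    norm_num
  rw [ht2, ← ht] at ha hx hy hz
  rw [ht2] at hb
  rw [← ht] at hc
  clear ht ht2
  subst ht3
  have hS : 0 < 1 + t + t ^ 2 := by positivity
  have hK1' : t ^ 3 - 1 ≠ 0 := sub_ne_zero.mpr hK1
  -- The factorization `t ^ 3 - 1 = (t - 1) * (1 + t + t ^ 2)` cancels `t - 1`.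
  have ha' : a = t / (1 + t + t ^ 2) := by
    rw [ha, div_eq_div_iff hK1' hS.ne']
    ring
  have hb' : b = t ^ 2 / (1 + t + t ^ 2) := by
    rw [hb, div_eq_div_iff hK1' hS.ne']
    ring
  have hc' : c = 1 / (1 + t + t ^ 2) := by
    rw [hc, div_eq_div_iff hK1' hS.ne']
    ring
  clear ha hb hc
  obtain ⟨r, hr⟩ : ∃ r : ℝ, r = √(1 + t + t ^ 2) := ⟨_, rfl⟩
  have hr0 : 0 < r := hr ▸ Real.sqrt_pos.mpr hS
  have hr2 : 1 + t + t ^ 2 = r ^ 2 := by rw [hr, Real.sq_sqrt hS.le]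
  rw [← hr] at hx hy hz
  have hsum : a + b + c = 1 := by
    rw [ha', hb', hc']
    field_simp
    ring
  have ha0 : 0 < a := by rw [ha']; positivity
  have hb0 : 0 < b := by rw [hb']; positivity
  have hc0 : 0 < c := by rw [hc']; positivity
  have hmat : Matrix.diagonal ![x, y, z] * A₆ * Matrix.diagonal ![x, y, z]
      = !![a, b, c; b, c, a; c, a, b] := by
    rw [hr2] at ha' hb' hc'
    subst hA ha' hb' hc' hx hy hz
    ext i j
    rw [Matrix.mul_diagonal, Matrix.diagonal_mul]
    fin_cases i <;> fin_cases j <;> simp <;> field_simp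
  refine ⟨⟨?_, ?_, ?_⟩, ?_, hmat⟩
  · rw [hx]; positivity
  · rw [hy]; positivity
  · rw [hz]; positivity
  · rw [hmat]
    refine ⟨fun i j => ?_, fun i => ?_, fun j => ?_⟩
    · fin_cases i <;> fin_cases j <;> simp [ha0.le, hb0.le, hc0.le]
    · fin_cases i <;> simp [Fin.sum_univ_three] <;> linarith
    · fin_cases j <;> simp [Fin.sum_univ_three] <;> linarith
end

section
/- Let K > 0 with K ≠ 1, and let A₇ be the 3×3 matrix with rows (K,K,1), (K,1,1), (1,1,K). If X = diag(x,y,z) is a positive diagonal matrix such that X·A₇·X is doubly stochastic, then y satisfies the octic equation (K−1)³y⁸ + 3(K−1)²y⁶ − (K−1)(2K−3)y⁴ − (4K−1)y² + K = 0. -/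
/-!
The row sums of `X * A₇ * X` give three quadratic equations in `x, y, z`. Comparing the first two
gives `x * D = y` with `D = 1 + (K - 1) * y ^ 2`; the second then gives
`y * z * D = 1 - 2 * y ^ 2 - (K - 1) * y ^ 4`. Multiplying the third equation by `y ^ 2 * D ^ 2` and
substituting these two relations leaves an equation in `y` alone, which is the octic.
-/

open Matrix BigOperators

/-- For A₇ = ![![K,K,1],![K,1,1],![1,1,K]], the middle diagonal entry of the
Sinkhorn scaling matrix satisfies an explicit octic equation. -/
theorem sinkhorn_A7_octic (K : ℝ) (hK : 0 < K) (hK1 : K ≠ 1)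
    (A₇ : Matrix (Fin 3) (Fin 3) ℝ)
    (hA : A₇ = !![K, K, 1; K, 1, 1; 1, 1, K])
    (x y z : ℝ) (hx : 0 < x) (hy : 0 < y) (hz : 0 < z)
    (hDS : IsDoublyStochastic
      (Matrix.diagonal ![x, y, z] * A₇ * Matrix.diagonal ![x, y, z])) :
    (K - 1) ^ 3 * y ^ 8 + 3 * (K - 1) ^ 2 * y ^ 6
      - (K - 1) * (2 * K - 3) * y ^ 4 - (4 * K - 1) * y ^ 2 + K = 0 := by
  subst hA
  obtain ⟨-, hrow, -⟩ := hDS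
  have r1 := hrow 0
  have r2 := hrow 1
  have r3 := hrow 2
  simp [Fin.sum_univ_three] at r1 r2 r3
  have hxD : x * (1 + (K - 1) * y ^ 2) = y := by
    linear_combination y * r1 - x * r2
  have hzD : y * z * (1 + (K - 1) * y ^ 2) = 1 - 2 * y ^ 2 - (K - 1) * y ^ 4 := by
    linear_combination (1 + (K - 1) * y ^ 2) * r2 - K * y * hxD
  have key : (y * z * (1 + (K - 1) * y ^ 2)) *
      (y * (x * (1 + (K - 1) * y ^ 2)) + y ^ 2 * (1 + (K - 1) * y ^ 2)
        + K * (y * z * (1 + (K - 1) * y ^ 2))) = y ^ 2 * (1 + (K - 1) * y ^ 2) ^ 2 := by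
    linear_combination y ^ 2 * (1 + (K - 1) * y ^ 2) ^ 2 * r3
  rw [hzD, hxD] at key
  linear_combination key
end

section
/- Let K > 1. Then the polynomial p(y) = (K−1)³y⁸ + 3(K−1)²y⁶ − (K−1)(2K−3)y⁴ − (4K−1)y² + K has exactly two positive real roots. -/
/-!
Put `a = K - 1 > 0` and `s = a * y ^ 2`. Multiplying the octic by `a` turns it into the quartic
`s⁴ + 3s³ - (2a - 1)s² - (4a + 3)s + a(a + 1)` in `s`, and `y ↦ a * y ^ 2` is a bijection of the
positive reals, so it suffices to show that this quartic has exactly two positive roots.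

At least two: completing the square in `a`, the quartic equals
`(a - (s² + 2s - 1/2))² - (4s³ + 8s² + 4s + 1)/4`. It is therefore negative where
`(s + 1)² = a + 3/2`, while it is positive at `0` and at `2a + 2`; apply the intermediate value
theorem on both sides.

At most two: on the positive reals the quartic divided by `s` is strictly convex. Concretely, its
second divided difference at distinct `x, y, z > 0` is `x + y + z + 3 + a(a + 1)/(xyz) > 0`
(`quartic_no_three_roots`).
-/

/-- The octic, multiplied by `a = K - 1` and written in the variable `s = a * y ^ 2`. -/
def quartic (a s : ℝ) : ℝ :=
  s ^ 4 + 3 * s ^ 3 - (2 * a - 1) * s ^ 2 - (4 * a + 3) * s + a * (a + 1)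

theorem quartic_no_three_roots {a x y z : ℝ} (ha : 0 < a) (hx : 0 < x) (hy : 0 < y) (hz : 0 < z)
    (hxy : x ≠ y) (hyz : y ≠ z) (hzx : z ≠ x)
    (h1 : quartic a x = 0) (h2 : quartic a y = 0) (h3 : quartic a z = 0) : False := by
  -- The second divided difference of `quartic a s / s`, with denominators cleared.
  have key : (x - y) * (y - z) * (z - x) * (x * y * z * (x + y + z + 3) + a * (a + 1))
      = -(quartic a x * (y * z * (y - z)) + quartic a y * (z * x * (z - x))
        + quartic a z * (x * y * (x - y))) := by
    unfold quartic; ring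
  rw [h1, h2, h3] at key
  have hpos : x * y * z * (x + y + z + 3) + a * (a + 1) ≠ 0 := by positivity
  have hne := mul_ne_zero (mul_ne_zero (mul_ne_zero (sub_ne_zero.2 hxy) (sub_ne_zero.2 hyz))
    (sub_ne_zero.2 hzx)) hpos
  exact hne (by linarith)

theorem quartic_exists_two_roots {a : ℝ} (ha : 0 < a) :
    ∃ u v, 0 < u ∧ u < v ∧ quartic a u = 0 ∧ quartic a v = 0 := by
  have hc : Continuous (quartic a) := by unfold quartic; fun_prop
  obtain ⟨m, hm0, hm⟩ : ∃ m : ℝ, 0 < m ∧ (m + 1) ^ 2 = a + 3 / 2 := by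
    refine ⟨√(a + 3 / 2) - 1, ?_, ?_⟩
    · rw [sub_pos, Real.lt_sqrt zero_le_one]
      linarith
    · rw [sub_add_cancel, Real.sq_sqrt (by linarith)]
  have hneg : quartic a m < 0 := by
    have h : quartic a m = (a - (m ^ 2 + 2 * m - 1 / 2)) ^ 2
        - (4 * m ^ 3 + 8 * m ^ 2 + 4 * m + 1) / 4 := by
      unfold quartic; ring
    have h0 : a - (m ^ 2 + 2 * m - 1 / 2) = 0 := by linarith
    rw [h, h0]
    have : 0 < 4 * m ^ 3 + 8 * m ^ 2 + 4 * m + 1 := by positivity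
    linarith
  have hzero : 0 < quartic a 0 := by
    unfold quartic
    have : 0 < a * (a + 1) := by positivity
    linarith
  have hbig : 0 < quartic a (2 * a + 2) := by
    unfold quartic
    ring_nf
    positivity
  have hmb : m ≤ 2 * a + 2 := by nlinarith
  obtain ⟨u, hu, hu0⟩ := intermediate_value_Icc' hm0.le hc.continuousOn ⟨hneg.le, hzero.le⟩
  obtain ⟨v, hv, hv0⟩ := intermediate_value_Icc hmb hc.continuousOn ⟨hneg.le, hbig.le⟩
  have hu1 : u ≠ 0 := by rintro rfl; exact hzero.ne' hu0
  have hum : u ≠ m := by rintro rfl; exact hneg.ne hu0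
  exact ⟨u, v, hu.1.lt_of_ne' hu1, (hu.2.lt_of_ne hum).trans_le hv.1, hu0, hv0⟩

/-- For K > 1, the octic polynomial arising from the matrix A₇ has exactly two
positive real roots. -/
theorem A7_octic_two_positive_roots (K : ℝ) (hK : 1 < K) :
    {y : ℝ | 0 < y ∧
      (K - 1) ^ 3 * y ^ 8 + 3 * (K - 1) ^ 2 * y ^ 6
        - (K - 1) * (2 * K - 3) * y ^ 4 - (4 * K - 1) * y ^ 2 + K = 0}.encard
      = 2 := by
  have ha : 0 < K - 1 := sub_pos.2 hK
  have hiff : ∀ y : ℝ, (K - 1) ^ 3 * y ^ 8 + 3 * (K - 1) ^ 2 * y ^ 6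
      - (K - 1) * (2 * K - 3) * y ^ 4 - (4 * K - 1) * y ^ 2 + K = 0
      ↔ quartic (K - 1) ((K - 1) * y ^ 2) = 0 := by
    intro y
    have h : quartic (K - 1) ((K - 1) * y ^ 2) = (K - 1) * ((K - 1) ^ 3 * y ^ 8
        + 3 * (K - 1) ^ 2 * y ^ 6 - (K - 1) * (2 * K - 3) * y ^ 4 - (4 * K - 1) * y ^ 2 + K) := by
      unfold quartic; ring
    rw [h, mul_eq_zero, or_iff_right ha.ne']
  simp only [hiff]
  obtain ⟨u, v, hu, huv, hu0, hv0⟩ := quartic_exists_two_roots ha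
  have hsq : ∀ w, 0 < w → (K - 1) * √(w / (K - 1)) ^ 2 = w := by
    intro w hw
    rw [Real.sq_sqrt (by positivity)]
    field_simp
  have hv : 0 < v := hu.trans huv
  have hback : ∀ y w : ℝ, 0 < y → (K - 1) * y ^ 2 = w → y = √(w / (K - 1)) := by
    rintro y _ hy rfl
    rw [mul_div_cancel_left₀ _ ha.ne', Real.sqrt_sq hy.le]
  rw [Set.encard_eq_two]
  refine ⟨√(u / (K - 1)), √(v / (K - 1)), ?_, ?_⟩
  · intro h
    have := hsq u hu
    rw [h, hsq v hv] at this
    exact huv.ne' this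
  ext y
  simp only [Set.mem_setOf_eq, Set.mem_insert_iff, Set.mem_singleton_iff]
  constructor
  · rintro ⟨hy, h⟩
    by_contra! hne
    exact quartic_no_three_roots ha hu hv (by positivity) huv.ne
      (fun e => hne.2 (hback y v hy e.symm)) (fun e => hne.1 (hback y u hy e)) hu0 hv0 h
  · rintro (rfl | rfl)
    · exact ⟨Real.sqrt_pos.2 (div_pos hu ha), by rw [hsq u hu, hu0]⟩
    · exact ⟨Real.sqrt_pos.2 (div_pos hv ha), by rw [hsq v hv, hv0]⟩
end

section
/- Let r ≥ 2 be an integer and let K = r(r+1)/2. Let A₂ be the 3×3 matrix with rows (K,1,1), (1,1,1), (1,1,1). Then with x = √(2/((r+1)(r+2))) and y = √((r+1)/(2(r+2))), the matrix X = diag(x,y,y) is positive diagonal and X·A₂·X is the doubly stochastic matrix with rows (a,b,b), (b,c,c), (b,c,c) where a = r/(r+2), b = 1/(r+2), c = (r+1)/(2(r+2)); in particular, every entry of this Sinkhorn limit is rational. -/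
/-!
With `X = diag(x, y, y)`, the entries of `X * A₂ * X` are `x * K * x`, `x * y` and `y * y`, so the identity with
`!![a, b, b; b, c, c; b, c, c]` reduces to three scalar identities. The only one that involves two
different square roots is `x * y = b`, which holds because the product of the radicands is the
perfect square `(1 / (r + 2)) ^ 2`. Double stochasticity then amounts to `a + 2 * b = 1` and
`b + 2 * c = 1`, and rationality is visible from the formulas for `a`, `b`, `c`.
-/

open Matrix BigOperators

/-- For a triangular number K = r(r+1)/2, the Sinkhorn limit of
A₂ = ![![K,1,1],![1,1,1],![1,1,1]] has rational entries, given explicitly. -/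
theorem sinkhorn_A2_triangular (r : ℕ) (hr : 2 ≤ r)
    (K : ℝ) (hK : K = (r : ℝ) * ((r : ℝ) + 1) / 2)
    (A₂ : Matrix (Fin 3) (Fin 3) ℝ)
    (hA : A₂ = !![K, 1, 1; 1, 1, 1; 1, 1, 1])
    (x y : ℝ)
    (hx : x = Real.sqrt (2 / (((r : ℝ) + 1) * ((r : ℝ) + 2))))
    (hy : y = Real.sqrt (((r : ℝ) + 1) / (2 * ((r : ℝ) + 2))))
    (a b c : ℝ)
    (ha : a = (r : ℝ) / ((r : ℝ) + 2))
    (hb : b = 1 / ((r : ℝ) + 2))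
    (hc : c = ((r : ℝ) + 1) / (2 * ((r : ℝ) + 2))) :
    (0 < x ∧ 0 < y) ∧
    IsDoublyStochastic
      (Matrix.diagonal ![x, y, y] * A₂ * Matrix.diagonal ![x, y, y]) ∧
    Matrix.diagonal ![x, y, y] * A₂ * Matrix.diagonal ![x, y, y]
      = !![a, b, b; b, c, c; b, c, c] ∧
    ∀ i j, ∃ q : ℚ,
      (Matrix.diagonal ![x, y, y] * A₂ * Matrix.diagonal ![x, y, y]) i j
        = (q : ℝ) := by
  have h1 : (0 : ℝ) < (r : ℝ) + 1 := by positivity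
  have h2 : (0 : ℝ) < (r : ℝ) + 2 := by positivity
  have hx0 : 0 < x := by rw [hx]; positivity
  have hy0 : 0 < y := by rw [hy]; positivity
  have hxx : x * x = 2 / (((r : ℝ) + 1) * ((r : ℝ) + 2)) := by
    rw [hx]; exact Real.mul_self_sqrt (by positivity)
  have hyy : y * y = c := by
    rw [hy, hc]; exact Real.mul_self_sqrt (by positivity)
  have hxy : x * y = b := by
    -- The radicands multiply to the square of `1 / (r + 2)`.
    rw [hx, hy, hb, ← Real.sqrt_mul (by positivity), Real.sqrt_eq_iff_mul_self_eq_of_pos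
      (by positivity)]
    field_simp
  have hxKx : x * K * x = a := by
    rw [mul_right_comm, hxx, hK, ha]
    field_simp
  have hX : Matrix.diagonal ![x, y, y] * A₂ * Matrix.diagonal ![x, y, y]
      = !![a, b, b; b, c, c; b, c, c] := by
    subst hA
    ext i j
    rw [Matrix.mul_diagonal, Matrix.diagonal_mul]
    fin_cases i <;> fin_cases j <;> simp [hxKx, hxy, hyy, mul_comm y x]
  have hab : a + b + b = 1 := by rw [ha, hb]; field_simp; ring
  have hbc : b + c + c = 1 := by rw [hb, hc]; field_simp; ring
  have ha0 : 0 ≤ a := by rw [ha]; positivity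
  have hb0 : 0 ≤ b := by rw [hb]; positivity
  have hc0 : 0 ≤ c := by rw [hc]; positivity
  have haq : ∃ q : ℚ, a = (q : ℝ) := ⟨r / (r + 2), by rw [ha]; push_cast; rfl⟩
  have hbq : ∃ q : ℚ, b = (q : ℝ) := ⟨1 / (r + 2), by rw [hb]; push_cast; rfl⟩
  have hcq : ∃ q : ℚ, c = (q : ℝ) := ⟨(r + 1) / (2 * (r + 2)), by rw [hc]; push_cast; rfl⟩
  rw [hX]
  refine ⟨⟨hx0, hy0⟩, ⟨fun i j => ?_, fun i => ?_, fun j => ?_⟩, rfl, fun i j => ?_⟩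
  · fin_cases i <;> fin_cases j <;> assumption
  · fin_cases i <;> simpa [Fin.sum_univ_three]
  · fin_cases j <;> simpa [Fin.sum_univ_three]
  · fin_cases i <;> fin_cases j <;> assumption
end

section
/- Let A₇ be the 3×3 matrix with rows (2,2,1), (2,1,1), (1,1,2). If X = diag(x,y,z) is a positive diagonal matrix such that X·A₇·X is doubly stochastic, then 4 − 28z² + 62z⁴ − 57z⁶ + 18z⁸ = 0, 2 − 17x² + 22x⁴ + 48x⁶ + 36x⁸ = 0, and 2 − 7y² − y⁴ + 3y⁶ + y⁸ = 0; in particular, x², y², and z² are algebraic numbers of degree at most 4 over ℚ. -/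
/-!
The row sums of `X A₇ X` give `x (2x + 2y + z) = 1`, `y (2x + y + z) = 1` and
`z (x + y + 2z) = 1`, and each variable in turn is isolated by elimination. Combining these
equations gives relations linear in a second quantity: `x (2 - 3z²) = z` when eliminating towards
`z`, `x (1 + y²) = y` towards `y`, and `xy (12x² - 1) = -2 + 14x² - 6x⁴` towards `x`. Substituting
into a remaining quadratic relation and clearing denominators yields exactly the claimed
polynomials (`quartic_z`, `quartic_y`, `quartic_x`), so no division is needed. They are quartics
in the squares with nonzero constant term, hence nonzero polynomials over `ℚ` of degree at most 4,
which gives the algebraicity claims.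
-/

open Matrix BigOperators

open Polynomial in
/-- A nonzero constant term guarantees that the annihilating polynomial is nonzero. -/
lemma exists_quartic_of_eq_zero (a b c d e : ℚ) (ha : a ≠ 0) (t : ℝ)
    (h : (a : ℝ) + b * t + c * t ^ 2 + d * t ^ 3 + e * t ^ 4 = 0) :
    ∃ p : Polynomial ℚ, p ≠ 0 ∧ p.degree ≤ 4 ∧ Polynomial.aeval t p = 0 := by
  refine ⟨C a + C b * X + C c * X ^ 2 + C d * X ^ 3 + C e * X ^ 4, ?_, ?_, ?_⟩
  · intro h0
    have := congrArg (Polynomial.eval 0) h0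
    simp at this
    exact ha this
  · compute_degree
  · simpa using h

lemma quartic_z {x y z : ℝ} (h1 : x * (2 * x + 2 * y + z) = 1)
    (h2 : y * (2 * x + y + z) = 1) (h3 : z * (x + y + 2 * z) = 1) :
    4 - 28 * z ^ 2 + 62 * z ^ 4 - 57 * z ^ 6 + 18 * z ^ 8 = 0 := by
  have hs : z * (x + y) = 1 - 2 * z ^ 2 := by linear_combination h3
  have hx : x * (2 - 3 * z ^ 2) = z := by linear_combination z * h1 - 2 * x * h3
  have hy : z * (2 - 3 * z ^ 2) * y = (1 - 2 * z ^ 2) * (2 - 3 * z ^ 2) - z ^ 2 := by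
    linear_combination (2 - 3 * z ^ 2) * hs - z * hx
  have hw : z * (2 - 3 * z ^ 2) * (2 * x + y + z) = z ^ 2 + (1 - z ^ 2) * (2 - 3 * z ^ 2) := by
    linear_combination (2 - 3 * z ^ 2) * hs + z * hx
  -- The second row equation multiplied by `(z (2 - 3z²))²`.
  have key : ((1 - 2 * z ^ 2) * (2 - 3 * z ^ 2) - z ^ 2) *
      (z ^ 2 + (1 - z ^ 2) * (2 - 3 * z ^ 2)) = (z * (2 - 3 * z ^ 2)) ^ 2 := by
    rw [← hy, ← hw]
    linear_combination (z * (2 - 3 * z ^ 2)) ^ 2 * h2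
  linear_combination key

lemma quartic_x {x y z : ℝ} (h1 : x * (2 * x + 2 * y + z) = 1)
    (h2 : y * (2 * x + y + z) = 1) (h3 : z * (x + y + 2 * z) = 1) :
    2 - 17 * x ^ 2 + 22 * x ^ 4 + 48 * x ^ 6 + 36 * x ^ 8 = 0 := by
  have hz : x * z = 1 - 2 * x ^ 2 - 2 * (x * y) := by linear_combination h1
  have hq : (x * y) ^ 2 = x * y - x ^ 2 := by
    linear_combination x * y * hz - x ^ 2 * h2
  -- The third row equation times `x²`, with `xz` and `(xy)²` eliminated.
  have hp : x * y * (12 * x ^ 2 - 1) = -2 + 14 * x ^ 2 - 6 * x ^ 4 := by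
    linear_combination x ^ 2 * h3 - 6 * hq -
      (x ^ 2 + x * y + 2 * (x * z) + 2 * (1 - 2 * x ^ 2 - 2 * (x * y))) * hz
  -- The relation `hq` multiplied by `(12x² - 1)²`.
  have key : (-2 + 14 * x ^ 2 - 6 * x ^ 4) ^ 2 =
      (-2 + 14 * x ^ 2 - 6 * x ^ 4) * (12 * x ^ 2 - 1) - x ^ 2 * (12 * x ^ 2 - 1) ^ 2 := by
    rw [← hp]
    linear_combination (12 * x ^ 2 - 1) ^ 2 * hq
  linear_combination key

lemma quartic_y {x y z : ℝ} (h1 : x * (2 * x + 2 * y + z) = 1)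
    (h2 : y * (2 * x + y + z) = 1) (h3 : z * (x + y + 2 * z) = 1) :
    2 - 7 * y ^ 2 - y ^ 4 + 3 * y ^ 6 + y ^ 8 = 0 := by
  have hx : x * (1 + y ^ 2) = y := by linear_combination y * h1 - x * h2
  have hz : y * (1 + y ^ 2) * z = 1 - 2 * y ^ 2 - y ^ 4 := by
    linear_combination (1 + y ^ 2) * h2 - 2 * y * hx
  have hw : y * (1 + y ^ 2) * (x + y + 2 * z) = 2 - 2 * y ^ 2 - y ^ 4 := by
    linear_combination y * hx + 2 * hz
  -- The third row equation multiplied by `(y (1 + y²))²`.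
  have key : (1 - 2 * y ^ 2 - y ^ 4) * (2 - 2 * y ^ 2 - y ^ 4) = (y * (1 + y ^ 2)) ^ 2 := by
    rw [← hz, ← hw]
    linear_combination (y * (1 + y ^ 2)) ^ 2 * h3
  linear_combination key

/-- For A₇ with K = 2, the entries of the Sinkhorn scaling matrix satisfy
explicit polynomial equations of degree 8 (degree 4 in their squares); in
particular x², y², z² are algebraic of degree at most 4 over ℚ. -/
theorem sinkhorn_A7_K2_groebner
    (A₇ : Matrix (Fin 3) (Fin 3) ℝ)
    (hA : A₇ = !![2, 2, 1; 2, 1, 1; 1, 1, 2])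
    (x y z : ℝ) (hx : 0 < x) (hy : 0 < y) (hz : 0 < z)
    (hDS : IsDoublyStochastic
      (Matrix.diagonal ![x, y, z] * A₇ * Matrix.diagonal ![x, y, z])) :
    (4 - 28 * z ^ 2 + 62 * z ^ 4 - 57 * z ^ 6 + 18 * z ^ 8 = 0 ∧
     2 - 17 * x ^ 2 + 22 * x ^ 4 + 48 * x ^ 6 + 36 * x ^ 8 = 0 ∧
     2 - 7 * y ^ 2 - y ^ 4 + 3 * y ^ 6 + y ^ 8 = 0) ∧
    (IsAlgebraic ℚ (x ^ 2) ∧ IsAlgebraic ℚ (y ^ 2) ∧ IsAlgebraic ℚ (z ^ 2)) ∧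
    (∃ p : Polynomial ℚ, p ≠ 0 ∧ p.degree ≤ 4 ∧
      Polynomial.aeval (x ^ 2) p = 0) ∧
    (∃ p : Polynomial ℚ, p ≠ 0 ∧ p.degree ≤ 4 ∧
      Polynomial.aeval (y ^ 2) p = 0) ∧
    (∃ p : Polynomial ℚ, p ≠ 0 ∧ p.degree ≤ 4 ∧
      Polynomial.aeval (z ^ 2) p = 0) := by
  subst hA
  obtain ⟨-, hrow, -⟩ := hDS
  have h1 := hrow 0
  have h2 := hrow 1
  have h3 := hrow 2
  simp only [Matrix.mul_diagonal, Matrix.diagonal_mul, Fin.sum_univ_three] at h1 h2 h3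
  simp at h1 h2 h3
  replace h1 : x * (2 * x + 2 * y + z) = 1 := by linear_combination h1
  replace h2 : y * (2 * x + y + z) = 1 := by linear_combination h2
  replace h3 : z * (x + y + 2 * z) = 1 := by linear_combination h3
  have ez := quartic_z h1 h2 h3
  have ex := quartic_x h1 h2 h3
  have ey := quartic_y h1 h2 h3
  have px := exists_quartic_of_eq_zero 2 (-17) 22 48 36 (by norm_num) (x ^ 2)
    (by push_cast; linear_combination ex)
  have py := exists_quartic_of_eq_zero 2 (-7) (-1) 3 1 (by norm_num) (y ^ 2)
    (by push_cast; linear_combination ey)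
  have pz := exists_quartic_of_eq_zero 4 (-28) 62 (-57) 18 (by norm_num) (z ^ 2)
    (by push_cast; linear_combination ez)
  refine ⟨⟨ez, ex, ey⟩, ⟨?_, ?_, ?_⟩, px, py, pz⟩
  · obtain ⟨p, hp, -, h⟩ := px
    exact ⟨p, hp, h⟩
  · obtain ⟨p, hp, -, h⟩ := py
    exact ⟨p, hp, h⟩
  · obtain ⟨p, hp, -, h⟩ := pz
    exact ⟨p, hp, h⟩
end
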